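/- Suppose a > 0 and N(x) ≤ C·x for all x ≥ 1. Define E₁(u) = e^{−u} N(e^u) − a for u > 0, E₁(u) = 0 for u ≤ 0, and E₂(u) = u·E₁(u). Write L₁(s) = ∫₀^∞ E₁(u) e^{−(s−1)u} du and L₂(s) = ∫₀^∞ E₂(u) e^{−(s−1)u} du. Then for every complex s with Re s > 1 (where ζ(s) ≠ 0): −ζ'(s)/(s ζ(s)) = L₂(s)/ζ(s) − ((2s − 1) L₁(s) + a)/(s (s − 1) ζ(s)) − 1/s + 1/(s − 1). -/

import Mathlib

open MeasureTheory Real Filter Complex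

/-- The generalized integer attached to an exponent vector `α`: `n(α) = ∏ k, (p k)^(α k)`. -/
noncomputable def beurlingInt (p : ℕ → ℝ) (α : ℕ →₀ ℕ) : ℝ :=
  α.prod fun k e => (p k) ^ e

/-- Counting function of generalized integers: `N(x) = #{α : n(α) < x}`. -/
noncomputable def beurlingN (p : ℕ → ℝ) (x : ℝ) : ℕ :=
  Set.ncard {α : ℕ →₀ ℕ | beurlingInt p α < x}

/-- The Beurling zeta function `ζ(s) = ∑_α n(α)^{-s}`. -/
noncomputable def beurlingZeta (p : ℕ → ℝ) (s : ℂ) : ℂ :=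
  ∑' α : ℕ →₀ ℕ, (beurlingInt p α : ℂ) ^ (-s)

/-- The derivative of the Beurling zeta function, `ζ'(s) = -∑_α log(n(α)) n(α)^{-s}`. -/
noncomputable def beurlingZetaDeriv (p : ℕ → ℝ) (s : ℂ) : ℂ :=
  -∑' α : ℕ →₀ ℕ, (Real.log (beurlingInt p α) : ℂ) * (beurlingInt p α : ℂ) ^ (-s)

/-- The error term `E₁(u) = e^{-u} N(e^u) - a` for `u > 0`, and `0` for `u ≤ 0`. -/
noncomputable def beurlingE₁ (p : ℕ → ℝ) (a : ℝ) (u : ℝ) : ℝ :=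
  if 0 < u then Real.exp (-u) * (beurlingN p (Real.exp u) : ℝ) - a else 0

/-- `E₂(u) = u E₁(u)`. -/
noncomputable def beurlingE₂ (p : ℕ → ℝ) (a : ℝ) (u : ℝ) : ℝ := u * beurlingE₁ p a u

/-!
A generalized integer `n` is counted by `N(e^u)` exactly when `u > log n`. Summing the integrals of
`f` over the half-lines `u > log n` therefore gives `∫ N(e^u) f(u) du`, and the choices
`f(u) = e^{-su}` and `f(u) = u e^{-su}` express `ζ(s)` and `ζ'(s)` through the Laplace transforms of
`N(e^u)` and `u N(e^u)`. Splitting `e^{-u} N(e^u) = a + E₁(u)` turns these into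
`ζ(s) = s (L₁(s) + a / (s - 1))` and `-ζ'(s) = s (L₂(s) + a / (s - 1)²) - ζ(s) / s`. The identity is
what remains after dividing by `s ζ(s)`, which the Euler product shows to be nonzero.
-/

open scoped Topology

section CountingIntegral

variable {ι X E : Type*} [NormedAddCommGroup E]

theorem hasSum_indicator_eq_ncard_nsmul {S : ι → Set X} {x : X} (hS : {i | x ∈ S i}.Finite)
    (f : X → E) : HasSum (fun i => (S i).indicator f x) ({i | x ∈ S i}.ncard • f x) := by
  classical
  have hsum : ∑ i ∈ hS.toFinset, (S i).indicator f x = {i | x ∈ S i}.ncard • f x := by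
    rw [Set.ncard_eq_toFinset_card _ hS, ← Finset.sum_const]
    exact Finset.sum_congr rfl fun i hi =>
      Set.indicator_of_mem (s := S i) (hS.mem_toFinset.1 hi) f
  rw [← hsum]
  exact hasSum_sum_of_ne_finset_zero fun i hi =>
    Set.indicator_of_notMem (s := S i) (fun hx => hi (hS.mem_toFinset.2 hx)) f

variable [MeasurableSpace X] {μ : Measure X}

theorem hasSum_setIntegral_of_integrable_ncard_nsmul [NormedSpace ℝ E] [Countable ι]
    {S : ι → Set X} (hS : ∀ i, MeasurableSet (S i)) (hfin : ∀ x, {i | x ∈ S i}.Finite)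
    {f : X → E} (hf : AEStronglyMeasurable f μ)
    (hint : Integrable (fun x => {i | x ∈ S i}.ncard • f x) μ) :
    HasSum (fun i => ∫ x in S i, f x ∂μ) (∫ x, {i | x ∈ S i}.ncard • f x ∂μ) := by
  have hnorm (x : X) : HasSum (fun i => ‖(S i).indicator f x‖) ‖{i | x ∈ S i}.ncard • f x‖ := by
    simpa only [norm_indicator_eq_indicator_norm, RCLike.norm_nsmul ℝ, nsmul_eq_mul]
      using hasSum_indicator_eq_ncard_nsmul (hfin x) fun x => ‖f x‖
  simp only [← integral_indicator (hS _)]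
  refine hasSum_integral_of_dominated_convergence (fun i x => ‖(S i).indicator f x‖)
    (fun i => hf.indicator (hS i)) (fun i => ae_of_all _ fun x => le_rfl)
    (ae_of_all _ fun x => (hnorm x).summable) ?_
    (ae_of_all _ fun x => hasSum_indicator_eq_ncard_nsmul (hfin x) f)
  simpa only [(hnorm _).tsum_eq] using hint.norm

end CountingIntegral

section EulerProduct

variable {ι R : Type*}

/-- The exponent vectors that vanish on `S`: they encode the generalized integers that are
products of primes with index outside `S`. -/
def vanishingOn (S : Finset ι) : Set (ι →₀ ℕ) := {α | ∀ k ∈ S, α k = 0}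

theorem vanishingOn_empty : vanishingOn (∅ : Finset ι) = Set.univ := by
  simp [vanishingOn]

theorem image_add_single_vanishingOn {S : Finset ι} {k : ι} (hk : k ∉ S) :
    (· + Finsupp.single k 1) '' vanishingOn S = {α ∈ vanishingOn S | α k ≠ 0} := by
  classical
  have hsingle {i : ι} (hi : i ∈ S) : Finsupp.single k 1 i = 0 :=
    Finsupp.single_eq_of_ne (ne_of_mem_of_not_mem hi hk)
  ext α
  constructor
  · rintro ⟨β, hβ, rfl⟩
    exact ⟨fun i hi => by simp [hβ i hi, hsingle hi], by simp⟩
  · rintro ⟨hα, hαk⟩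
    refine ⟨α - Finsupp.single k 1, fun i hi => by simp [hα i hi], tsub_add_cancel_of_le ?_⟩
    exact Finsupp.single_le_iff.2 (Nat.one_le_iff_ne_zero.2 hαk)

theorem vanishingOn_insert_union_image [DecidableEq ι] {S : Finset ι} {k : ι} (hk : k ∉ S) :
    vanishingOn (insert k S) ∪ (· + Finsupp.single k 1) '' vanishingOn S = vanishingOn S := by
  ext α
  rw [image_add_single_vanishingOn hk]
  simp only [vanishingOn, Set.mem_union, Set.mem_ofPred_eq,
    Finset.forall_mem_insert]
  tauto

theorem disjoint_vanishingOn_insert_image [DecidableEq ι] {S : Finset ι} {k : ι} (hk : k ∉ S) :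
    Disjoint (vanishingOn (insert k S)) ((· + Finsupp.single k 1) '' vanishingOn S) := by
  rw [image_add_single_vanishingOn hk, Set.disjoint_left]
  exact fun α hα hα' => hα'.2 (hα k (Finset.mem_insert_self k S))

variable [NormedCommRing R] [CompleteSpace R] {χ : AddChar (ι →₀ ℕ) R}

theorem tsum_vanishingOn_insert [DecidableEq ι] (hχ : Summable fun α => ‖χ α‖) {S : Finset ι}
    {k : ι} (hk : k ∉ S) :
    ∑' α : vanishingOn (insert k S), χ α =
      (1 - χ (Finsupp.single k 1)) * ∑' α : vanishingOn S, χ α := by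
  have hsub (A : Set (ι →₀ ℕ)) : Summable (χ ∘ (↑) : A → R) := hχ.of_norm.subtype A
  have hsplit : ∑' α : vanishingOn S, χ α =
      ∑' α : vanishingOn (insert k S), χ α +
        χ (Finsupp.single k 1) * ∑' α : vanishingOn S, χ α := by
    calc ∑' α : vanishingOn S, χ α
      _ = ∑' α : vanishingOn (insert k S), χ α +
          ∑' α : ((· + Finsupp.single k 1) '' vanishingOn S : Set (ι →₀ ℕ)), χ α := by
        rw [← (hsub _).tsum_union_disjoint (disjoint_vanishingOn_insert_image hk) (hsub _),
          vanishingOn_insert_union_image hk]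
      _ = _ := by
        rw [tsum_image (g := (· + Finsupp.single k 1)) χ (add_left_injective _).injOn,
          ← Summable.tsum_mul_left (f := fun α : vanishingOn S => χ α) _ (hsub _)]
        simp only [AddChar.map_add_eq_mul, mul_comm]
  linear_combination -hsplit

theorem prod_one_sub_mul_tsum_eq (hχ : Summable fun α => ‖χ α‖) (S : Finset ι) :
    (∏ k ∈ S, (1 - χ (Finsupp.single k 1))) * ∑' α, χ α = ∑' α : vanishingOn S, χ α := by
  classical
  induction S using Finset.induction_on with
  | empty => rw [vanishingOn_empty, tsum_univ, Finset.prod_empty, one_mul]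
  | insert k S hk ih => rw [Finset.prod_insert hk, mul_assoc, ih, tsum_vanishingOn_insert hχ hk]

theorem tendsto_tsum_vanishingOn (hχ : Summable fun α => ‖χ α‖) :
    Tendsto (fun S : Finset ι => ∑' α : vanishingOn S, χ α) atTop (𝓝 1) := by
  classical
  have hlim : ∑' α, Pi.single (M := fun _ : ι →₀ ℕ => R) 0 1 α = 1 := tsum_pi_single _ _
  simp only [tsum_subtype (vanishingOn _) χ]
  rw [← hlim]
  refine tendsto_tsum_of_dominated_convergence hχ (fun α => ?_)
    (Eventually.of_forall fun S α => norm_indicator_le_norm_self _ _)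
  rcases eq_or_ne α 0 with rfl | hα
  · simp [vanishingOn]
  · obtain ⟨k, hk⟩ := Finsupp.ne_iff.1 hα
    rw [Pi.single_eq_of_ne hα]
    refine tendsto_const_nhds.congr' ?_
    filter_upwards [eventually_ge_atTop {k}] with S hS
    exact (Set.indicator_of_notMem (s := vanishingOn S)
      (fun h => hk (h k (Finset.singleton_subset_iff.1 hS))) _).symm

/-- The Euler product, with the factors kept on the side of the sum: a vanishing sum would then
force `0 = 1`. -/
theorem tendsto_prod_one_sub_mul_tsum (hχ : Summable fun α => ‖χ α‖) :
    Tendsto (fun S : Finset ι => (∏ k ∈ S, (1 - χ (Finsupp.single k 1))) * ∑' α, χ α)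
      atTop (𝓝 1) := by
  simpa only [prod_one_sub_mul_tsum_eq hχ] using tendsto_tsum_vanishingOn hχ

theorem tsum_addChar_ne_zero [Nontrivial R] (hχ : Summable fun α => ‖χ α‖) :
    ∑' α, χ α ≠ 0 := by
  intro hzero
  have hlim := tendsto_prod_one_sub_mul_tsum hχ
  simp only [hzero, mul_zero] at hlim
  exact zero_ne_one (tendsto_nhds_unique tendsto_const_nhds hlim)

end EulerProduct

section LaplaceIntegrals

theorem integrableOn_mul_cexp_neg_mul_Ioi {z : ℂ} (hz : 0 < z.re) (c : ℝ) :
    IntegrableOn (fun u : ℝ => (u : ℂ) * cexp (-z * u)) (Set.Ioi c) := by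
  have hdecay : (fun u : ℝ => u * rexp (-z.re * u)) =O[atTop] fun u => rexp (-(z.re / 2) * u) := by
    have hlin := (isLittleO_pow_exp_pos_mul_atTop 1 (half_pos hz)).isBigO.mul
      (Asymptotics.isBigO_refl (fun u : ℝ => rexp (-z.re * u)) atTop)
    simp only [pow_one, ← Real.exp_add] at hlin
    exact hlin.congr_right fun u => by ring_nf
  have hreal : IntegrableOn (fun u : ℝ => u * rexp (-z.re * u)) (Set.Ioi c) :=
    integrable_of_isBigO_exp_neg (half_pos hz) (by fun_prop) hdecay
  refine hreal.congr' (by fun_prop) (ae_of_all _ fun u => ?_)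
  simp [Complex.norm_exp]

theorem integral_mul_cexp_neg_mul_Ioi {z : ℂ} (hz : 0 < z.re) (c : ℝ) :
    ∫ u in Set.Ioi c, (u : ℂ) * cexp (-z * u) = (c / z + 1 / z ^ 2) * cexp (-z * c) := by
  have hz0 : z ≠ 0 := by rintro rfl; simp at hz
  have hexp : IntegrableOn (fun u : ℝ => cexp (-z * u)) (Set.Ioi c) :=
    integrableOn_exp_mul_complex_Ioi (by simpa using hz) c
  have hmul := integrableOn_mul_cexp_neg_mul_Ioi hz c
  let F : ℝ → ℂ := fun u => -(u / z + 1 / z ^ 2) * cexp (-z * u)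
  have hderiv (x : ℝ) : HasDerivAt F (x * cexp (-z * x)) x := by
    have hid : HasDerivAt (fun u : ℝ => (u : ℂ)) 1 x := Complex.ofRealCLM.hasDerivAt
    refine (((hid.div_const z).add_const (1 / z ^ 2)).neg.mul
      (hid.const_mul (-z)).cexp).congr_deriv ?_
    simp only [Pi.neg_apply]
    field_simp
    ring
  have hF : IntegrableOn F (Set.Ioi c) := by
    refine ((hmul.const_mul (-1 / z)).add (hexp.const_mul (-1 / z ^ 2))).congr
      (ae_of_all _ fun u => ?_)
    simp only [F, Pi.add_apply]
    ring
  have hlim : Tendsto F atTop (𝓝 0) :=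
    tendsto_zero_of_hasDerivAt_of_integrableOn_Ioi (fun x _ => hderiv x) hmul hF
  rw [integral_Ioi_of_hasDerivAt_of_tendsto' (fun x _ => hderiv x) hmul hlim]
  simp only [F]
  ring

end LaplaceIntegrals

section GeneralizedIntegers

variable {p : ℕ → ℝ}

theorem beurlingInt_zero (p : ℕ → ℝ) : beurlingInt p 0 = 1 :=
  Finsupp.prod_zero_index

theorem beurlingInt_add (p : ℕ → ℝ) (α β : ℕ →₀ ℕ) :
    beurlingInt p (α + β) = beurlingInt p α * beurlingInt p β :=
  Finsupp.prod_add_index' (fun _ => pow_zero _) fun _ _ _ => pow_add _ _ _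

theorem beurlingInt_single (p : ℕ → ℝ) (k e : ℕ) :
    beurlingInt p (Finsupp.single k e) = p k ^ e :=
  Finsupp.prod_single_index (pow_zero _)

theorem one_le_beurlingInt (hp : ∀ k, 1 ≤ p k) (α : ℕ →₀ ℕ) : 1 ≤ beurlingInt p α :=
  Finset.prod_induction _ (1 ≤ ·) (fun _ _ => one_le_mul_of_one_le_of_one_le) le_rfl
    fun k _ => one_le_pow₀ (hp k)

theorem pow_le_beurlingInt (hp : ∀ k, 1 ≤ p k) (α : ℕ →₀ ℕ) (k : ℕ) :
    p k ^ α k ≤ beurlingInt p α := by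
  rw [← Finsupp.single_add_erase k α, beurlingInt_add, beurlingInt_single,
    Finsupp.single_add_erase]
  exact le_mul_of_one_le_right (pow_nonneg (zero_le_one.trans (hp k)) _)
    (one_le_beurlingInt hp _)

theorem finite_setOf_beurlingInt_lt (hp : ∀ k, 1 < p k) (hptop : Tendsto p atTop atTop) (x : ℝ) :
    {α | beurlingInt p α < x}.Finite := by
  have hsmall : {k | p k < x}.Finite := by
    simpa only [← Nat.cofinite_eq_atTop, eventually_cofinite, not_le]
      using hptop.eventually_ge_atTop x
  choose M hM using fun k => pow_unbounded_of_one_lt x (hp k)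
  let β : ℕ →₀ ℕ := Finsupp.onFinset hsmall.toFinset (fun k => if p k < x then M k else 0)
    fun k hk => hsmall.mem_toFinset.2 (by_contra fun h => hk (if_neg h))
  refine (Set.finite_Iic β).subset fun α (hα : beurlingInt p α < x) k => ?_
  have hk : p k ^ α k < x := (pow_le_beurlingInt (fun k => (hp k).le) α k).trans_lt hα
  change α k ≤ if p k < x then M k else 0
  split_ifs with hpk
  · exact ((pow_lt_pow_iff_right₀ (hp k)).1 (hk.trans (hM k))).le
  · by_contra! hne
    exact hpk ((le_self_pow₀ (hp k).le hne.ne').trans_lt hk)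

theorem monotone_beurlingN (hp : ∀ k, 1 < p k) (hptop : Tendsto p atTop atTop) :
    Monotone (beurlingN p) := fun _ y hxy =>
  Set.ncard_le_ncard (fun _ hα => lt_of_lt_of_le hα hxy) (finite_setOf_beurlingInt_lt hp hptop y)

theorem ofReal_beurlingInt_cpow_neg (hp : ∀ k, 1 ≤ p k) (α : ℕ →₀ ℕ) (s : ℂ) :
    (beurlingInt p α : ℂ) ^ (-s) = cexp (-s * Real.log (beurlingInt p α)) := by
  have hpos : 0 < beurlingInt p α := zero_lt_one.trans_le (one_le_beurlingInt hp α)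
  rw [cpow_def_of_ne_zero (ofReal_ne_zero.2 hpos.ne'), ofReal_log hpos.le, mul_comm]

theorem beurlingZeta_ne_zero (hp : ∀ k, 1 ≤ p k) {s : ℂ}
    (hs : Summable fun α => (beurlingInt p α : ℂ) ^ (-s)) : beurlingZeta p s ≠ 0 := by
  let χ : AddChar (ℕ →₀ ℕ) ℂ :=
    { toFun := fun α => (beurlingInt p α : ℂ) ^ (-s)
      map_zero_eq_one' := by rw [beurlingInt_zero, ofReal_one, one_cpow]
      map_add_eq_mul' := fun α β => by
        rw [beurlingInt_add, ofReal_mul, mul_cpow_ofReal_nonneg] <;>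
          exact zero_le_one.trans (one_le_beurlingInt hp _) }
  exact tsum_addChar_ne_zero (χ := χ) hs.norm

theorem hasSum_setIntegral_Ioi_log_beurlingInt (hp : ∀ k, 1 < p k)
    (hptop : Tendsto p atTop atTop) {f : ℝ → ℂ}
    (hf : AEStronglyMeasurable f (volume.restrict (Set.Ioi 0)))
    (hint : IntegrableOn (fun u => (beurlingN p (rexp u) : ℂ) * f u) (Set.Ioi 0)) :
    HasSum (fun α => ∫ u in Set.Ioi (Real.log (beurlingInt p α)), f u)
      (∫ u in Set.Ioi 0, (beurlingN p (rexp u) : ℂ) * f u) := by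
  have hone (α : ℕ →₀ ℕ) : 1 ≤ beurlingInt p α := one_le_beurlingInt (fun k => (hp k).le) α
  have hcount (u : ℝ) : {α | u ∈ Set.Ioi (Real.log (beurlingInt p α))} =
      {α | beurlingInt p α < rexp u} :=
    Set.ext fun α => Real.log_lt_iff_lt_exp (zero_lt_one.trans_le (hone α))
  have hN (u : ℝ) : (beurlingN p (rexp u) : ℂ) * f u =
      {α | u ∈ Set.Ioi (Real.log (beurlingInt p α))}.ncard • f u := by
    rw [hcount, nsmul_eq_mul, beurlingN]
  have hrestrict (α : ℕ →₀ ℕ) : (volume.restrict (Set.Ioi 0)).restrict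
      (Set.Ioi (Real.log (beurlingInt p α))) =
        volume.restrict (Set.Ioi (Real.log (beurlingInt p α))) :=
    Measure.restrict_restrict_of_subset (Set.Ioi_subset_Ioi (Real.log_nonneg (hone α)))
  simp only [hN] at hint ⊢
  simpa only [hrestrict] using hasSum_setIntegral_of_integrable_ncard_nsmul
    (fun _ => measurableSet_Ioi)
    (fun u => hcount u ▸ finite_setOf_beurlingInt_lt hp hptop (rexp u)) hf hint

theorem hasSum_beurlingInt_cpow_neg (hp : ∀ k, 1 < p k) (hptop : Tendsto p atTop atTop)
    {s : ℂ} (hs : 0 < s.re)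
    (hint : IntegrableOn (fun u : ℝ => (beurlingN p (rexp u) : ℂ) * cexp (-s * u)) (Set.Ioi 0)) :
    HasSum (fun α => (beurlingInt p α : ℂ) ^ (-s))
      (s * ∫ u in Set.Ioi (0 : ℝ), (beurlingN p (rexp u) : ℂ) * cexp (-s * u)) := by
  have hs0 : s ≠ 0 := by rintro rfl; simp at hs
  have hsum := hasSum_setIntegral_Ioi_log_beurlingInt hp hptop (by fun_prop) hint
  refine (hsum.mul_left s).congr_fun fun α => ?_
  rw [integral_exp_mul_complex_Ioi (by simpa using hs),
    ofReal_beurlingInt_cpow_neg fun k => (hp k).le]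
  field_simp

theorem hasSum_log_mul_beurlingInt_cpow_neg (hp : ∀ k, 1 < p k) (hptop : Tendsto p atTop atTop)
    {s : ℂ} (hs : 0 < s.re)
    (hint : IntegrableOn (fun u : ℝ => (beurlingN p (rexp u) : ℂ) * cexp (-s * u)) (Set.Ioi 0))
    (hint' : IntegrableOn (fun u : ℝ => (beurlingN p (rexp u) : ℂ) * (u * cexp (-s * u)))
      (Set.Ioi 0)) :
    HasSum (fun α => (Real.log (beurlingInt p α) : ℂ) * (beurlingInt p α : ℂ) ^ (-s))
      (s * (∫ u in Set.Ioi (0 : ℝ), (beurlingN p (rexp u) : ℂ) * (u * cexp (-s * u))) -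
        ∫ u in Set.Ioi (0 : ℝ), (beurlingN p (rexp u) : ℂ) * cexp (-s * u)) := by
  have hs0 : s ≠ 0 := by rintro rfl; simp at hs
  have hsum := hasSum_setIntegral_Ioi_log_beurlingInt hp hptop (by fun_prop) hint
  have hsum' := hasSum_setIntegral_Ioi_log_beurlingInt hp hptop (by fun_prop) hint'
  refine ((hsum'.mul_left s).sub hsum).congr_fun fun α => ?_
  rw [integral_exp_mul_complex_Ioi (by simpa using hs), integral_mul_cexp_neg_mul_Ioi hs,
    ofReal_beurlingInt_cpow_neg fun k => (hp k).le]
  field_simp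
  ring

end GeneralizedIntegers

section ErrorTerm

variable {p : ℕ → ℝ} {a : ℝ} {s : ℂ}

/-- `L₁(s)`, the Laplace transform of `E₁` at `s - 1`. -/
noncomputable def beurlingL₁ (p : ℕ → ℝ) (a : ℝ) (s : ℂ) : ℂ :=
  ∫ u in Set.Ioi (0 : ℝ), (beurlingE₁ p a u : ℂ) * cexp (-(s - 1) * u)

/-- `L₂(s)`, the Laplace transform of `E₂` at `s - 1`. -/
noncomputable def beurlingL₂ (p : ℕ → ℝ) (a : ℝ) (s : ℂ) : ℂ :=
  ∫ u in Set.Ioi (0 : ℝ), (beurlingE₂ p a u : ℂ) * cexp (-(s - 1) * u)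

theorem eqOn_beurlingN_exp_mul_cexp (p : ℕ → ℝ) (a : ℝ) (s : ℂ) :
    Set.EqOn (fun u : ℝ => (beurlingN p (rexp u) : ℂ) * cexp (-s * u))
      (fun u => beurlingE₁ p a u * cexp (-(s - 1) * u) + a * cexp (-(s - 1) * u))
      (Set.Ioi 0) := by
  intro u (hu : 0 < u)
  have hexp : cexp (-s * u) = rexp (-u) * cexp (-(s - 1) * u) := by
    rw [ofReal_exp, ← Complex.exp_add]
    push_cast
    ring_nf
  simp only [hexp, beurlingE₁, if_pos hu]
  push_cast
  ring

theorem eqOn_beurlingN_exp_mul_mul_cexp (p : ℕ → ℝ) (a : ℝ) (s : ℂ) :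
    Set.EqOn (fun u : ℝ => (beurlingN p (rexp u) : ℂ) * (u * cexp (-s * u)))
      (fun u => beurlingE₂ p a u * cexp (-(s - 1) * u) + a * (u * cexp (-(s - 1) * u)))
      (Set.Ioi 0) := by
  intro u hu
  have hE₁ := eqOn_beurlingN_exp_mul_cexp p a s hu
  simp only [beurlingE₂, ofReal_mul] at hE₁ ⊢
  linear_combination (u : ℂ) * hE₁

theorem integrableOn_beurlingN_exp_mul_cexp (hs : 1 < s.re)
    (hE₁ : IntegrableOn (fun u : ℝ => (beurlingE₁ p a u : ℂ) * cexp (-(s - 1) * u)) (Set.Ioi 0)) :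
    IntegrableOn (fun u : ℝ => (beurlingN p (rexp u) : ℂ) * cexp (-s * u)) (Set.Ioi 0) :=
  (integrableOn_congr_fun (eqOn_beurlingN_exp_mul_cexp p a s) measurableSet_Ioi).2
    (hE₁.add ((integrableOn_exp_mul_complex_Ioi (by simpa using hs) 0).const_mul _))

theorem integrableOn_beurlingN_exp_mul_mul_cexp (hs : 1 < s.re)
    (hE₂ : IntegrableOn (fun u : ℝ => (beurlingE₂ p a u : ℂ) * cexp (-(s - 1) * u)) (Set.Ioi 0)) :
    IntegrableOn (fun u : ℝ => (beurlingN p (rexp u) : ℂ) * (u * cexp (-s * u))) (Set.Ioi 0) :=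
  (integrableOn_congr_fun (eqOn_beurlingN_exp_mul_mul_cexp p a s) measurableSet_Ioi).2
    (hE₂.add ((integrableOn_mul_cexp_neg_mul_Ioi (by simpa using hs) 0).const_mul _))

theorem integral_beurlingN_exp_mul_cexp (hs : 1 < s.re)
    (hE₁ : IntegrableOn (fun u : ℝ => (beurlingE₁ p a u : ℂ) * cexp (-(s - 1) * u)) (Set.Ioi 0)) :
    ∫ u in Set.Ioi (0 : ℝ), (beurlingN p (rexp u) : ℂ) * cexp (-s * u) =
      beurlingL₁ p a s + a / (s - 1) := by
  rw [setIntegral_congr_fun measurableSet_Ioi (eqOn_beurlingN_exp_mul_cexp p a s),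
    integral_add hE₁ ((integrableOn_exp_mul_complex_Ioi (by simpa using hs) 0).const_mul _),
    integral_const_mul, integral_exp_mul_complex_Ioi (by simpa using hs), ofReal_zero, mul_zero,
    Complex.exp_zero, neg_div_neg_eq, mul_one_div, beurlingL₁]

theorem integral_beurlingN_exp_mul_mul_cexp (hs : 1 < s.re)
    (hE₂ : IntegrableOn (fun u : ℝ => (beurlingE₂ p a u : ℂ) * cexp (-(s - 1) * u)) (Set.Ioi 0)) :
    ∫ u in Set.Ioi (0 : ℝ), (beurlingN p (rexp u) : ℂ) * (u * cexp (-s * u)) =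
      beurlingL₂ p a s + a / (s - 1) ^ 2 := by
  rw [setIntegral_congr_fun measurableSet_Ioi (eqOn_beurlingN_exp_mul_mul_cexp p a s),
    integral_add hE₂ ((integrableOn_mul_cexp_neg_mul_Ioi (by simpa using hs) 0).const_mul _),
    integral_const_mul, integral_mul_cexp_neg_mul_Ioi (by simpa using hs), ofReal_zero, zero_div,
    zero_add, mul_zero, Complex.exp_zero, mul_one, mul_one_div, beurlingL₂]

theorem hasSum_beurlingZeta (hp : ∀ k, 1 < p k) (hptop : Tendsto p atTop atTop) (hs : 1 < s.re)
    (hE₁ : IntegrableOn (fun u : ℝ => (beurlingE₁ p a u : ℂ) * cexp (-(s - 1) * u)) (Set.Ioi 0)) :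
    HasSum (fun α => (beurlingInt p α : ℂ) ^ (-s)) (s * (beurlingL₁ p a s + a / (s - 1))) := by
  rw [← integral_beurlingN_exp_mul_cexp hs hE₁]
  exact hasSum_beurlingInt_cpow_neg hp hptop (zero_lt_one.trans hs)
    (integrableOn_beurlingN_exp_mul_cexp hs hE₁)

theorem neg_beurlingZetaDeriv_eq (hp : ∀ k, 1 < p k) (hptop : Tendsto p atTop atTop)
    (hs : 1 < s.re)
    (hE₁ : IntegrableOn (fun u : ℝ => (beurlingE₁ p a u : ℂ) * cexp (-(s - 1) * u)) (Set.Ioi 0))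
    (hE₂ : IntegrableOn (fun u : ℝ => (beurlingE₂ p a u : ℂ) * cexp (-(s - 1) * u)) (Set.Ioi 0)) :
    -beurlingZetaDeriv p s =
      s * (beurlingL₂ p a s + a / (s - 1) ^ 2) - (beurlingL₁ p a s + a / (s - 1)) := by
  rw [beurlingZetaDeriv, neg_neg, ← integral_beurlingN_exp_mul_cexp hs hE₁,
    ← integral_beurlingN_exp_mul_mul_cexp hs hE₂]
  exact (hasSum_log_mul_beurlingInt_cpow_neg hp hptop (zero_lt_one.trans hs)
    (integrableOn_beurlingN_exp_mul_cexp hs hE₁)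
    (integrableOn_beurlingN_exp_mul_mul_cexp hs hE₂)).tsum_eq

theorem measurable_beurlingE₁ (hp : ∀ k, 1 < p k) (hptop : Tendsto p atTop atTop) :
    Measurable (beurlingE₁ p a) := by
  have hN : Measurable fun u => (beurlingN p (rexp u) : ℝ) :=
    measurable_from_nat.comp ((monotone_beurlingN hp hptop).comp Real.exp_monotone).measurable
  exact Measurable.ite measurableSet_Ioi (by fun_prop) measurable_const

theorem norm_beurlingE₁_le {C : ℝ} (hC : ∀ x, 1 ≤ x → (beurlingN p x : ℝ) ≤ C * x) {u : ℝ}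
    (hu : 0 < u) : ‖beurlingE₁ p a u‖ ≤ C + |a| := by
  have hN : rexp (-u) * beurlingN p (rexp u) ≤ C := by
    rw [Real.exp_neg, inv_mul_le_iff₀ (Real.exp_pos u), mul_comm]
    exact hC _ (Real.one_le_exp hu.le)
  rw [beurlingE₁, if_pos hu]
  refine (norm_sub_le _ _).trans (add_le_add_left ?_ |a|)
  rwa [Real.norm_of_nonneg (by positivity)]

theorem integrableOn_beurlingE₁_mul (hp : ∀ k, 1 < p k) (hptop : Tendsto p atTop atTop)
    {C : ℝ} (hC : ∀ x, 1 ≤ x → (beurlingN p x : ℝ) ≤ C * x) {w : ℝ → ℂ}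
    (hw : IntegrableOn w (Set.Ioi 0)) :
    IntegrableOn (fun u => (beurlingE₁ p a u : ℂ) * w u) (Set.Ioi 0) := by
  refine hw.bdd_mul (measurable_beurlingE₁ hp hptop).complex_ofReal.aestronglyMeasurable
    (c := C + |a|) ?_
  filter_upwards [ae_restrict_mem measurableSet_Ioi] with u hu
  exact (norm_real _).trans_le (norm_beurlingE₁_le hC hu)

theorem integrableOn_beurlingE₁_mul_cexp (hp : ∀ k, 1 < p k) (hptop : Tendsto p atTop atTop)
    {C : ℝ} (hC : ∀ x, 1 ≤ x → (beurlingN p x : ℝ) ≤ C * x) (hs : 1 < s.re) :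
    IntegrableOn (fun u : ℝ => (beurlingE₁ p a u : ℂ) * cexp (-(s - 1) * u)) (Set.Ioi 0) :=
  integrableOn_beurlingE₁_mul hp hptop hC (integrableOn_exp_mul_complex_Ioi (by simpa using hs) 0)

theorem integrableOn_beurlingE₂_mul_cexp (hp : ∀ k, 1 < p k) (hptop : Tendsto p atTop atTop)
    {C : ℝ} (hC : ∀ x, 1 ≤ x → (beurlingN p x : ℝ) ≤ C * x) (hs : 1 < s.re) :
    IntegrableOn (fun u : ℝ => (beurlingE₂ p a u : ℂ) * cexp (-(s - 1) * u)) (Set.Ioi 0) := by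
  have hw : IntegrableOn (fun u : ℝ => (u : ℂ) * cexp (-(s - 1) * u)) (Set.Ioi 0) :=
    integrableOn_mul_cexp_neg_mul_Ioi (by simpa using hs) 0
  simpa only [beurlingE₂, ofReal_mul, mul_assoc, mul_left_comm] using
    integrableOn_beurlingE₁_mul hp hptop hC hw

end ErrorTerm

theorem key_identity_general {p : ℕ → ℝ} (hp : ∀ k, 1 < p k) (hptop : Tendsto p atTop atTop)
    (a : ℝ) {s : ℂ} (hs : 1 < s.re)
    (hE₁ : IntegrableOn (fun u : ℝ => (beurlingE₁ p a u : ℂ) * cexp (-(s - 1) * u)) (Set.Ioi 0))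
    (hE₂ : IntegrableOn (fun u : ℝ => (beurlingE₂ p a u : ℂ) * cexp (-(s - 1) * u)) (Set.Ioi 0)) :
    -beurlingZetaDeriv p s / (s * beurlingZeta p s) =
      beurlingL₂ p a s / beurlingZeta p s -
        ((2 * s - 1) * beurlingL₁ p a s + a) / (s * (s - 1) * beurlingZeta p s) -
        1 / s + 1 / (s - 1) := by
  have hs0 : s ≠ 0 := by rintro rfl; norm_num at hs
  have hs1 : s - 1 ≠ 0 := sub_ne_zero.2 (by rintro rfl; simp at hs)
  have hsum := hasSum_beurlingZeta hp hptop hs hE₁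
  have hζ0 : beurlingZeta p s ≠ 0 := beurlingZeta_ne_zero (fun k => (hp k).le) hsum.summable
  have hζ : beurlingZeta p s = s * (beurlingL₁ p a s + a / (s - 1)) := hsum.tsum_eq
  have hL₁ : beurlingL₁ p a s = beurlingZeta p s / s - a / (s - 1) := by
    rw [hζ, mul_div_cancel_left₀ _ hs0, add_sub_cancel_right]
  rw [neg_beurlingZetaDeriv_eq hp hptop hs hE₁ hE₂, hL₁]
  field_simp
  ring

/-- The key identity (11) of the paper: with
`L₁(s) = ∫₀^∞ E₁(u) e^{-(s-1)u} du` and `L₂(s) = ∫₀^∞ E₂(u) e^{-(s-1)u} du`, for `Re s > 1`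
 one has `-ζ'(s)/(sζ(s)) = L₂(s)/ζ(s) - ((2s-1)L₁(s) + a)/(s(s-1)ζ(s)) - 1/s + 1/(s-1)`. -/
theorem key_identity
    (p : ℕ → ℝ) (hmono : Monotone p) (hp1 : 1 < p 0) (hptop : Tendsto p atTop atTop)
    (a : ℝ) (ha : 0 < a)
    (C : ℝ) (hC : ∀ x : ℝ, 1 ≤ x → (beurlingN p x : ℝ) ≤ C * x) :
    ∀ s : ℂ, 1 < s.re →
      -beurlingZetaDeriv p s / (s * beurlingZeta p s) =
        (∫ u in Set.Ioi (0 : ℝ), (beurlingE₂ p a u : ℂ) * Complex.exp (-(s - 1) * u)) /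
            beurlingZeta p s -
          ((2 * s - 1) *
              (∫ u in Set.Ioi (0 : ℝ), (beurlingE₁ p a u : ℂ) * Complex.exp (-(s - 1) * u)) + a) /
            (s * (s - 1) * beurlingZeta p s) -
          1 / s + 1 / (s - 1) := by
  intro s hs
  have hp (k : ℕ) : 1 < p k := hp1.trans_le (hmono k.zero_le)
  exact key_identity_general hp hptop a hs (integrableOn_beurlingE₁_mul_cexp hp hptop hC hs)
    (integrableOn_beurlingE₂_mul_cexp hp hptop hC hs)
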